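/- Fix x ∈ (0, 1) and let q♭(t) = F_q(t, 0, √2), so that (q♭)⁻¹(x) is well defined. Let u(t, x) = F_p(t, Δ(t, x)). Then for every t > (q♭)⁻¹(x) one has u(t, x) < √(2(1 − g(x))), and the map t ↦ u(t, x) is nonincreasing on ((q♭)⁻¹(x), +∞). -/

import Mathlib

open Real Set Filter MeasureTheory
open scoped Topology

/-- The potential `g` from the Hamiltonian `H(x,p) = p²/2 + g(x)`. -/
noncomputable def g (x : ℝ) : ℝ := if |x| ≤ 1 then 1 - (1 - x ^ 2) ^ 4 else 1

/-- The derivative of `g`. -/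
noncomputable def g' (x : ℝ) : ℝ := if |x| ≤ 1 then 8 * x * (1 - x ^ 2) ^ 3 else 0

/-- `(q, p)` is a (global) solution of the Hamiltonian system (HS): `q̇ = p`, `ṗ = -g'(q)`. -/
def IsHSSol (q p : ℝ → ℝ) : Prop :=
  (∀ t : ℝ, HasDerivAt q (p t) t) ∧ (∀ t : ℝ, HasDerivAt p (-(g' (q t))) t)

/-- `F` is the flow of (HS): `F t q₀ p₀ = (q t, p t)` for the solution with data `(q₀, p₀)`. -/
def IsHSFlow (F : ℝ → ℝ → ℝ → ℝ × ℝ) : Prop :=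
  ∀ q₀ p₀ : ℝ,
    IsHSSol (fun t => (F t q₀ p₀).1) (fun t => (F t q₀ p₀).2) ∧ F 0 q₀ p₀ = (q₀, p₀)

/-- The set `([0,∞) × {2}) ∪ ({0} × (0,2])`, codomain of the map `Δ`. -/
def Dset : Set (ℝ × ℝ) := (Ici (0:ℝ) ×ˢ ({2} : Set ℝ)) ∪ ({(0:ℝ)} ×ˢ Ioc (0:ℝ) 2)

/-- `T` is the smallest positive period of `q`. -/
def IsSmallestPeriod (q : ℝ → ℝ) (T : ℝ) : Prop :=
  0 < T ∧ Function.Periodic q T ∧ ∀ T' : ℝ, 0 < T' → Function.Periodic q T' → T ≤ T'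

/-- `T` is the period map `𝒯`, assigning to `p₀ ∈ (0, √2)` the smallest positive period of
the `q`-component of the solution of (HS) with initial datum `(0, p₀)`. -/
def IsPeriodMap (F : ℝ → ℝ → ℝ → ℝ × ℝ) (T : ℝ → ℝ) : Prop :=
  ∀ p₀ ∈ Ioo (0:ℝ) (Real.sqrt 2), IsSmallestPeriod (fun t => (F t 0 p₀).1) (T p₀)

/-- `Δ` associates to `(t,x)` the datum in `Dset` whose orbit stays positive on `(0,t)`
and reaches `x` at time `t`. -/
def IsDeltaMap (F : ℝ → ℝ → ℝ → ℝ × ℝ) (Δ : ℝ → ℝ → ℝ × ℝ) : Prop :=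
  ∀ t x : ℝ, 0 < t → 0 < x →
    Δ t x ∈ Dset ∧ (F t (Δ t x).1 (Δ t x).2).1 = x ∧
      ∀ s ∈ Ioo (0:ℝ) t, 0 < (F s (Δ t x).1 (Δ t x).2).1

/-- The solution `u` of the conservation law built from the flow `F` and the map `Δ`
(extended by `0` at `x = 0`). -/
noncomputable def usol (F : ℝ → ℝ → ℝ → ℝ × ℝ) (Δ : ℝ → ℝ → ℝ × ℝ) (t x : ℝ) : ℝ :=
  if 0 < x then (F t (Δ t x).1 (Δ t x).2).2
  else if x < 0 then -(F t (Δ t (-x)).1 (Δ t (-x)).2).2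
  else 0

theorem hasDerivAt_mx (y : ℝ) :
    HasDerivAt (fun y : ℝ => (max y 0) ^ 4) (4 * (max y 0) ^ 3) y := by
  rcases lt_trichotomy y 0 with h | h | h
  · have h0 : HasDerivAt (fun _ : ℝ => (0:ℝ)) 0 y := hasDerivAt_const _ _
    rw [max_eq_right h.le]
    norm_num
    refine h0.congr_of_eventuallyEq ?_
    filter_upwards [Iio_mem_nhds h] with z hz
    rw [max_eq_right (le_of_lt hz)]; norm_num
  · subst h
    have h1 : HasDerivWithinAt (fun y : ℝ => (max y 0) ^ 4) 0 (Iic (0:ℝ)) 0 := by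
      refine (hasDerivWithinAt_const (0:ℝ) (Iic (0:ℝ)) (0:ℝ)).congr ?_ ?_
      · intro z hz
        have hz' : z ≤ 0 := hz
        simp [max_eq_right hz']
      · simp
    have h2 : HasDerivWithinAt (fun y : ℝ => (max y 0) ^ 4) 0 (Ici (0:ℝ)) 0 := by
      have := (hasDerivAt_pow 4 (0:ℝ)).hasDerivWithinAt (s := Ici (0:ℝ))
      norm_num at this
      refine this.congr ?_ ?_
      · intro z hz
        have hz' : 0 ≤ z := hz
        simp [max_eq_left hz']
      · simp
    have := h1.union h2
    rw [Iic_union_Ici, hasDerivWithinAt_univ] at this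
    simpa using this
  · have h0 := hasDerivAt_pow 4 y
    norm_num at h0
    rw [max_eq_left h.le]
    refine h0.congr_of_eventuallyEq ?_
    filter_upwards [Ioi_mem_nhds h] with z hz
    rw [max_eq_left (le_of_lt hz)]

theorem g_eq (x : ℝ) : g x = 1 - (max (1 - x ^ 2) 0) ^ 4 := by
  unfold g
  split_ifs with h
  · rw [max_eq_left]
    have := (sq_le_one_iff_abs_le_one x).2 h
    linarith
  · rw [max_eq_right]
    · norm_num
    · by_contra h2
      apply h
      rw [← sq_le_one_iff_abs_le_one]
      linarith

theorem g'_eq (x : ℝ) : g' x = 8 * x * (max (1 - x ^ 2) 0) ^ 3 := by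
  unfold g'
  split_ifs with h
  · rw [max_eq_left]
    have := (sq_le_one_iff_abs_le_one x).2 h
    linarith
  · rw [max_eq_right]
    · norm_num
    · by_contra h2
      apply h
      rw [← sq_le_one_iff_abs_le_one]
      linarith

theorem hasDerivAt_g (x : ℝ) : HasDerivAt g (g' x) x := by
  have h1 : HasDerivAt (fun x : ℝ => 1 - x ^ 2) (-(2 * x)) x := by
    have := (hasDerivAt_pow 2 x).const_sub 1
    simpa using this
  have h2 := ((hasDerivAt_mx (1 - x ^ 2)).comp x h1).const_sub 1
  have e : g = fun x => 1 - (max (1 - x ^ 2) 0) ^ 4 := funext g_eq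
  rw [e, g'_eq]
  exact h2.congr_deriv (by ring)

theorem g_le_one (x : ℝ) : g x ≤ 1 := by
  rw [g_eq]; have : 0 ≤ (max (1 - x ^ 2) 0) ^ 4 := by positivity
  linarith

theorem g_nonneg (x : ℝ) : 0 ≤ g x := by
  rw [g_eq]
  have h1 : max (1 - x ^ 2) 0 ≤ 1 := max_le (by nlinarith [sq_nonneg x]) zero_le_one
  have : (max (1 - x ^ 2) 0) ^ 4 ≤ 1 := pow_le_one₀ (le_max_right _ _) h1
  linarith

theorem g_zero : g 0 = 0 := by rw [g_eq]; norm_num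

theorem g'_nonneg {x : ℝ} (hx : 0 ≤ x) : 0 ≤ g' x := by
  rw [g'_eq]; positivity

theorem g'_cmp {a b : ℝ} (ha : 0 ≤ a) (hab : a ≤ b) : a * g' b ≤ b * g' a := by
  rw [g'_eq, g'_eq]
  have h : max (1 - b ^ 2) 0 ≤ max (1 - a ^ 2) 0 := by
    apply max_le_max _ le_rfl
    nlinarith
  have h3 : (max (1 - b ^ 2) 0) ^ 3 ≤ (max (1 - a ^ 2) 0) ^ 3 :=
    pow_le_pow_left₀ (le_max_right _ _) h 3
  have h4 : 0 ≤ 8 * a * b := by have := ha.trans hab; positivity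
  nlinarith [mul_le_mul_of_nonneg_left h3 h4]

theorem energy {q p : ℝ → ℝ} (h : IsHSSol q p) (t : ℝ) :
    p t ^ 2 + 2 * g (q t) = p 0 ^ 2 + 2 * g (q 0) := by
  have hd : ∀ s, HasDerivAt (fun s => p s ^ 2 + 2 * g (q s)) 0 s := by
    intro s
    have h1 := (h.2 s).pow 2
    have h2 := ((hasDerivAt_g (q s)).comp s (h.1 s)).const_mul 2
    have h3 := h1.add h2
    exact h3.congr_deriv (by push_cast; ring)
  exact is_const_of_deriv_eq_zero (fun s => (hd s).differentiableAt) (fun s => (hd s).deriv) t 0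

theorem first_time {f : ℝ → ℝ} (hf : Continuous f) {a t : ℝ} (hat : a ≤ t) (ha : 0 < f a)
    (ht : f t ≤ 0) : ∃ s, a < s ∧ s ≤ t ∧ f s = 0 ∧ ∀ r, a ≤ r → r < s → 0 < f r := by
  let S : Set ℝ := Icc a t ∩ {s | f s ≤ 0}
  have hS : IsCompact S := isCompact_Icc.inter_right (isClosed_le hf continuous_const)
  have hne : S.Nonempty := ⟨t, ⟨hat, le_rfl⟩, ht⟩
  obtain ⟨s, ⟨⟨h1, h2⟩, h3⟩, hmin⟩ := hS.exists_isLeast hne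
  have h3' : f s ≤ 0 := h3
  have hpos : ∀ r, a ≤ r → r < s → 0 < f r := by
    intro r hr hrs
    by_contra hc
    have := hmin ⟨⟨hr, hrs.le.trans h2⟩, not_lt.1 hc⟩
    linarith
  have has : a < s := by
    rcases h1.eq_or_lt with h | h
    · subst h; linarith
    · exact h
  refine ⟨s, has, h2, le_antisymm h3' ?_, hpos⟩
  have hc : Tendsto f (𝓝[<] s) (𝓝 (f s)) := hf.continuousAt.mono_left nhdsWithin_le_nhds
  refine ge_of_tendsto hc ?_
  filter_upwards [Ioo_mem_nhdsLT has] with r hr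
  exact (hpos r hr.1.le hr.2).le

theorem contq {q p : ℝ → ℝ} (h : IsHSSol q p) : Continuous q :=
  continuous_iff_continuousAt.2 fun t => (h.1 t).continuousAt

theorem contp {q p : ℝ → ℝ} (h : IsHSSol q p) : Continuous p :=
  continuous_iff_continuousAt.2 fun t => (h.2 t).continuousAt

theorem mono_of {f f' : ℝ → ℝ} (hf : ∀ t, HasDerivAt f (f' t) t) {a b : ℝ} (hab : a ≤ b)
    (h : ∀ s, a < s → s < b → 0 ≤ f' s) : f a ≤ f b := by
  have : MonotoneOn f (Icc a b) := by
    refine monotoneOn_of_deriv_nonneg (convex_Icc a b)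
      (fun t _ => (hf t).continuousAt.continuousWithinAt)
      (fun t _ => (hf t).differentiableAt.differentiableWithinAt) ?_
    intro s hs
    rw [interior_Icc] at hs
    rw [(hf s).deriv]
    exact h s hs.1 hs.2
  exact this ⟨le_rfl, hab⟩ ⟨hab, le_rfl⟩ hab

theorem smono_of {f f' : ℝ → ℝ} (hf : ∀ t, HasDerivAt f (f' t) t) {a b : ℝ} (hab : a < b)
    (h : ∀ s, a < s → s < b → 0 < f' s) : f a < f b := by
  have : StrictMonoOn f (Icc a b) := by
    refine strictMonoOn_of_deriv_pos (convex_Icc a b)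
      (fun t _ => (hf t).continuousAt.continuousWithinAt) ?_
    intro s hs
    rw [interior_Icc] at hs
    rw [(hf s).deriv]
    exact h s hs.1 hs.2
  exact this ⟨le_rfl, hab.le⟩ ⟨hab.le, le_rfl⟩ hab

theorem comparison {q1 p1 q2 p2 : ℝ → ℝ} (h1 : IsHSSol q1 p1) (h2 : IsHSSol q2 p2)
    (z1 : q1 0 = 0) (z2 : q2 0 = 0) (hp : p1 0 < p2 0) {t : ℝ} (ht : 0 < t)
    (hpos : ∀ s, 0 < s → s ≤ t → 0 < q1 s) : q1 t < q2 t := by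
  by_contra hc
  have hc : q2 t - q1 t ≤ 0 := by linarith [not_lt.1 hc]
  have hcont : Continuous (fun s => q2 s - q1 s) := (contq h2).sub (contq h1)
  have hpc : ∀ᶠ s in 𝓝 (0:ℝ), 0 < p2 s - p1 s :=
    ((contp h2).sub (contp h1)).continuousAt.eventually (lt_mem_nhds (by simpa using hp))
  obtain ⟨e, he, hb⟩ := Metric.eventually_nhds_iff.1 hpc
  have hsm : ∀ r, 0 < r → r < e → 0 < q2 r - q1 r := by
    intro r hr hre
    have := smono_of (f := fun s => q2 s - q1 s) (fun s => (h2.1 s).sub (h1.1 s)) hr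
      (fun s hs hs' => hb (by rw [Real.dist_eq, abs_lt]; constructor <;> linarith))
    simpa [z1, z2] using this
  obtain ⟨a, ha0, ha1⟩ : ∃ a, 0 < a ∧ a < min e t := exists_between (lt_min he ht)
  have hae := ha1.trans_le (min_le_left _ _)
  have hat := ha1.trans_le (min_le_right _ _)
  obtain ⟨s, has, hst, hs0, hlt⟩ := first_time hcont hat.le (hsm a ha0 hae) hc
  have hall : ∀ r, 0 < r → r < s → q1 r < q2 r := by
    intro r hr hrs
    rcases lt_or_ge r a with h | h
    · linarith [hsm r hr (h.trans hae)]
    · linarith [hlt r h hrs]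
  have hW : ∀ r, 0 < r → r ≤ s → 0 ≤ q1 r * p2 r - q2 r * p1 r := by
    intro r hr hrs
    have hd : ∀ t, HasDerivAt (fun t => q1 t * p2 t - q2 t * p1 t)
        (q2 t * g' (q1 t) - q1 t * g' (q2 t)) t := by
      intro t
      have := ((h1.1 t).mul (h2.2 t)).sub ((h2.1 t).mul (h1.2 t))
      exact this.congr_deriv (by ring)
    have := mono_of hd hr.le (fun v hv hv' => by
      have := g'_cmp (hpos v hv (by linarith)).le (hall v hv (by linarith)).le
      linarith)
    simpa [z1, z2] using this
  have hmono : MonotoneOn (fun r => q2 r / q1 r) (Icc a s) := by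
    have hne : ∀ r ∈ Icc a s, q1 r ≠ 0 := fun r hr =>
      (hpos r (by linarith [hr.1]) (hr.2.trans hst)).ne'
    have hd : ∀ r ∈ Icc a s, HasDerivAt (fun r => q2 r / q1 r)
        ((p2 r * q1 r - q2 r * p1 r) / q1 r ^ 2) r := fun r hr =>
      (h2.1 r).div (h1.1 r) (hne r hr)
    refine monotoneOn_of_deriv_nonneg (convex_Icc a s)
      (fun r hr => (hd r hr).continuousAt.continuousWithinAt)
      (fun r hr => (hd r (interior_subset hr)).differentiableAt.differentiableWithinAt) ?_
    intro r hr
    have hr' := interior_subset hr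
    rw [(hd r hr').deriv]
    apply div_nonneg _ (sq_nonneg _)
    have := hW r (by linarith [hr'.1]) hr'.2
    linarith
  have hfin := hmono ⟨le_rfl, has.le⟩ ⟨has.le, le_rfl⟩ has.le
  have e1 : q2 s / q1 s = 1 := by
    have : q2 s = q1 s := by linarith
    rw [this]
    exact div_self (hpos s (by linarith) hst).ne'
  have e2 : 1 < q2 a / q1 a := by
    rw [one_lt_div (hpos a ha0 hat.le)]
    exact hall a ha0 has
  try simp only at hfin
  linarith

/-- `p` is nonincreasing while `q` is positive. -/
theorem p_anti {q p : ℝ → ℝ} (h : IsHSSol q p) {a b : ℝ} (hab : a ≤ b)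
    (hpos : ∀ s, a < s → s < b → 0 < q s) : p b ≤ p a := by
  have := mono_of (f := fun t => - p t) (f' := fun t => g' (q t))
    (fun t => (h.2 t).neg.congr_deriv (by simp)) hab (fun s h1 h2 => g'_nonneg (hpos s h1 h2).le)
  simpa using this

theorem flat_lt_one {q p : ℝ → ℝ} (h : IsHSSol q p) (z : q 0 = 0) (hp : p 0 = √2) {t : ℝ}
    (ht : 0 ≤ t) : q t < 1 := by
  by_contra hc
  obtain ⟨s, hs, -, hs0, hlt⟩ := first_time (f := fun t => 1 - q t)
    (continuous_const.sub (contq h)) ht (by simp [z]) (by linarith [not_lt.1 hc])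
  have hd : ∀ t, HasDerivAt (fun t => Real.exp (12 * t) * (1 - q t))
      (Real.exp (12 * t) * (12 * (1 - q t) - p t)) t := by
    intro t
    have e1 : HasDerivAt (fun t : ℝ => Real.exp (12 * t)) (Real.exp (12 * t) * 12) t := by
      have := ((hasDerivAt_id t).const_mul 12).exp
      simpa using this
    exact (e1.mul ((h.1 t).const_sub 1)).congr_deriv (by ring)
  have := mono_of hd hs.le (fun r hr hrs => by
    apply mul_nonneg (Real.exp_pos _).le
    have hq := hlt r hr.le hrs
    have he := energy h r
    rw [hp, z, g_zero, Real.sq_sqrt (by norm_num), g_eq] at he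
    have hm : (max (1 - q r ^ 2) 0) ≤ 2 * (1 - q r) := by
      apply max_le
      · nlinarith [sq_nonneg (1 - q r)]
      · linarith
    have hm0 : 0 ≤ max (1 - q r ^ 2) 0 := le_max_right _ _
    have hm1 : max (1 - q r ^ 2) 0 ≤ 1 := max_le (by nlinarith [sq_nonneg (q r)]) zero_le_one
    have h1 : p r ^ 2 ≤ (12 * (1 - q r)) ^ 2 := by
      have : (max (1 - q r ^ 2) 0) ^ 4 ≤ (max (1 - q r ^ 2) 0) ^ 2 :=
        pow_le_pow_of_le_one hm0 hm1 (by norm_num)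
      have : (max (1 - q r ^ 2) 0) ^ 2 ≤ (2 * (1 - q r)) ^ 2 := pow_le_pow_left₀ hm0 hm 2
      nlinarith
    have := abs_le_of_sq_le_sq' h1 (by linarith)
    linarith [this.2])
  try simp only at hs0
  rw [hs0, z] at this
  norm_num at this

theorem flat_pos {q p : ℝ → ℝ} (h : IsHSSol q p) (z : q 0 = 0) (hp : p 0 = √2) {t : ℝ}
    (ht : 0 ≤ t) : 0 < p t := by
  by_contra hc
  obtain ⟨s, hs, -, hs0, hlt⟩ := first_time (contp h) ht (by rw [hp]; positivity) (not_lt.1 hc)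
  have h1 := flat_lt_one h z hp hs.le
  have h0 := mono_of h.1 hs.le (fun r hr hrs => (hlt r hr.le hrs).le)
  rw [z] at h0
  have he := energy h s
  rw [hp, z, g_zero, Real.sq_sqrt (by norm_num), g_eq, hs0] at he
  have : 0 < max (1 - q s ^ 2) 0 := lt_max_of_lt_left (by nlinarith)
  have : 0 < (max (1 - q s ^ 2) 0) ^ 4 := by positivity
  linarith

theorem flat_mono {q p : ℝ → ℝ} (h : IsHSSol q p) (z : q 0 = 0) (hp : p 0 = √2) {a b : ℝ}
    (ha : 0 ≤ a) (hab : a < b) : q a < q b :=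
  smono_of h.1 hab (fun _ hs _ => flat_pos h z hp (ha.trans hs.le))

theorem flat_reach {q p : ℝ → ℝ} (h : IsHSSol q p) (z : q 0 = 0) (hp : p 0 = √2) {x : ℝ}
    (hx : x ∈ Ioo (0:ℝ) 1) : ∃ t, 0 ≤ t ∧ q t = x := by
  by_cases hex : ∃ t, 0 ≤ t ∧ x ≤ q t
  · obtain ⟨t, ht, hxt⟩ := hex
    obtain ⟨s, hs, hsx⟩ := intermediate_value_Icc ht (contq h).continuousOn
      (show x ∈ Icc (q 0) (q t) from ⟨by rw [z]; exact hx.1.le, hxt⟩)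
    exact ⟨s, hs.1, hsx⟩
  · exfalso
    push Not at hex
    have hx2 : 0 < 1 - x ^ 2 := by nlinarith [hx.1, hx.2]
    set c := (1 - x ^ 2) ^ 2 with hc
    have hc0 : 0 < c := by positivity
    have hpc : ∀ s, 0 ≤ s → c ≤ p s := by
      intro s hs
      have h0 : 0 ≤ q s := by
        have := mono_of h.1 hs (fun r hr _ => (flat_pos h z hp hr.le).le)
        linarith
      have h1 := hex s hs
      have he := energy h s
      rw [hp, z, g_zero, Real.sq_sqrt (by norm_num), g_eq] at he
      have hm : 1 - x ^ 2 ≤ max (1 - q s ^ 2) 0 := le_max_of_le_left (by nlinarith)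
      have hm4 := pow_le_pow_left₀ hx2.le hm 4
      have hcc : c ^ 2 = (1 - x ^ 2) ^ 4 := by rw [hc]; ring
      have : 0 ≤ c ^ 2 := sq_nonneg _
      exact le_of_sq_le_sq (by linarith) (flat_pos h z hp hs).le
    have ht : 0 ≤ 1 / c := by positivity
    have := mono_of (f := fun t => q t - c * t) (f' := fun t => p t - c)
      (fun t => ((h.1 t).sub ((hasDerivAt_id t).const_mul c)).congr_deriv (by simp)) ht
      (fun s hs _ => by linarith [hpc s hs.le])
    have h2 := hex _ ht
    have h3 : c * (1 / c) = 1 := by field_simp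
    simp only [z, h3] at this
    linarith [hx.2]

theorem fast {q p : ℝ → ℝ} (h : IsHSSol q p) (z : 0 ≤ q 0) (hp : p 0 = 2) {t : ℝ}
    (ht : 0 ≤ t) : √2 * t ≤ q t := by
  have hge : ∀ s, √2 ^ 2 ≤ p s ^ 2 := by
    intro s
    have he := energy h s
    rw [hp] at he
    rw [Real.sq_sqrt (by norm_num)]
    nlinarith [g_nonneg (q 0), g_le_one (q s)]
  have hpp : ∀ s, 0 ≤ s → 0 < p s := by
    intro s hs
    by_contra hc
    obtain ⟨r, -, -, hr, -⟩ := first_time (contp h) hs (by rw [hp]; norm_num) (not_lt.1 hc)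
    have := hge r
    rw [hr, Real.sq_sqrt (by norm_num)] at this
    norm_num at this
  have := mono_of (f := fun t => q t - √2 * t) (f' := fun t => p t - √2)
      (fun t => ((h.1 t).sub ((hasDerivAt_id t).const_mul (√2))).congr_deriv (by simp)) ht
      (fun s hs _ => by
        have := le_of_sq_le_sq (hge s) (hpp s hs.le).le
        linarith)
  try simp only at this
  linarith

theorem flat_slow {q p : ℝ → ℝ} (h : IsHSSol q p) (z : q 0 = 0) (hp : p 0 = √2) {t : ℝ}
    (ht : 0 ≤ t) : q t ≤ √2 * t := by
  have := mono_of (f := fun t => √2 * t - q t) (f' := fun t => √2 - p t)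
      (fun t => (((hasDerivAt_id t).const_mul (√2)).sub (h.1 t)).congr_deriv (by simp)) ht
      (fun s hs _ => by
        have he := energy h s
        rw [hp, z, g_zero] at he
        have := le_of_sq_le_sq (a := p s) (b := √2)
          (by nlinarith [g_nonneg (q s)]) (by positivity)
        linarith)
  simp only [z] at this
  linarith

theorem delta_small (F : ℝ → ℝ → ℝ → ℝ × ℝ) (hF : IsHSFlow F)
    (Δ : ℝ → ℝ → ℝ × ℝ) (hΔ : IsDeltaMap F Δ)
    (x : ℝ) (hx : x ∈ Ioo (0:ℝ) 1) (tx : ℝ) (h0 : 0 ≤ tx) (htx : (F tx 0 (Real.sqrt 2)).1 = x)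
    (t : ℝ) (ht : tx < t) :
    ∃ p₀, 0 < p₀ ∧ p₀ < √2 ∧ usol F Δ t x = (F t 0 p₀).2 ∧ (F t 0 p₀).1 = x ∧
      ∀ s, 0 < s → s ≤ t → 0 < (F s 0 p₀).1 := by
  have ht0 : 0 < t := h0.trans_lt ht
  obtain ⟨hD, hX, hP⟩ := hΔ t x ht0 hx.1
  obtain ⟨hb, hb0⟩ := hF 0 (√2)
  have zb : (F 0 0 (√2)).1 = 0 := by rw [hb0]
  have pb : (F 0 0 (√2)).2 = √2 := by rw [hb0]
  have hflat : x < (F t 0 (√2)).1 := by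
    have := flat_mono hb zb pb h0 ht
    simpa [htx] using this
  have hflatpos : ∀ s, 0 < s → 0 < (F s 0 (√2)).1 := by
    intro s hs
    have := flat_mono hb zb pb le_rfl hs
    simpa [zb] using this
  have hu : usol F Δ t x = (F t (Δ t x).1 (Δ t x).2).2 := by
    unfold usol; rw [if_pos hx.1]
  generalize hd : Δ t x = d at *
  obtain ⟨a, b⟩ := d
  try simp only at hX hP hu
  obtain ⟨hs, hs0⟩ := hF a b
  have za : (F 0 a b).1 = a := by rw [hs0]
  have pa : (F 0 a b).2 = b := by rw [hs0]
  rcases hD with ⟨h1, h2⟩ | ⟨h1, h2⟩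
  · exfalso
    have h1 : 0 ≤ a := h1
    have h2 : b = 2 := h2
    have e1 := fast hs (by rw [za]; exact h1) (by rw [pa]; exact h2) ht0.le
    have e2 := flat_slow hb zb pb ht0.le
    try simp only at e1 e2
    linarith
  · have h1 : a = 0 := h1
    have h2 : 0 < b ∧ b ≤ 2 := h2
    subst h1
    refine ⟨b, h2.1, ?_, hu, hX, ?_⟩
    · by_contra hc
      rcases (not_lt.1 hc).eq_or_lt with h | h
      · subst h; linarith
      · have := comparison hb hs zb za (by simpa only [pb, pa] using h) ht0
          (fun s hs _ => hflatpos s hs)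
        try simp only at this
        linarith
    · intro s hs hst
      rcases hst.eq_or_lt with h | h
      · subst h; rw [hX]; exact hx.1
      · exact hP s ⟨hs, h⟩

/-- For `x ∈ (0,1)` and `q♭(t) = F_q(t,0,√2)` (so that `(q♭)⁻¹(x)` is well defined):
for every `t > (q♭)⁻¹(x)` one has `u(t,x) < √(2(1-g(x)))`, and `t ↦ u(t,x)` is
nonincreasing on `((q♭)⁻¹(x), +∞)`. -/
theorem stmt_17 (F : ℝ → ℝ → ℝ → ℝ × ℝ) (hF : IsHSFlow F)
    (Δ : ℝ → ℝ → ℝ × ℝ) (hΔ : IsDeltaMap F Δ)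
    (x : ℝ) (hx : x ∈ Ioo (0:ℝ) 1) :
    (∃ tx : ℝ, 0 ≤ tx ∧ (F tx 0 (Real.sqrt 2)).1 = x) ∧
    ∀ tx : ℝ, 0 ≤ tx → (F tx 0 (Real.sqrt 2)).1 = x →
      (∀ t : ℝ, tx < t → usol F Δ t x < Real.sqrt (2 * (1 - g x))) ∧
      AntitoneOn (fun t => usol F Δ t x) (Ioi tx) := by
  obtain ⟨hb, hb0⟩ := hF 0 (√2)
  have zb : (F 0 0 (√2)).1 = 0 := by rw [hb0]
  have pb : (F 0 0 (√2)).2 = √2 := by rw [hb0]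
  refine ⟨flat_reach hb zb pb hx, ?_⟩
  intro tx h0 htx
  have hen : ∀ p₀ t, (F t 0 p₀).2 ^ 2 + 2 * g (F t 0 p₀).1 = p₀ ^ 2 := by
    intro p₀ t
    have := energy (hF 0 p₀).1 t
    simpa [(hF 0 p₀).2, g_zero] using this
  refine ⟨?_, ?_⟩
  · intro t ht
    obtain ⟨p₀, hp0, hp2, hu, hX, -⟩ := delta_small F hF Δ hΔ x hx tx h0 htx t ht
    rw [hu]
    apply Real.lt_sqrt_of_sq_lt
    have := hen p₀ t
    rw [hX] at this
    have h2 : p₀ ^ 2 < 2 := by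
      have := pow_lt_pow_left₀ hp2 hp0.le (n := 2) (by norm_num)
      rwa [Real.sq_sqrt (by norm_num)] at this
    linarith
  · intro t1 ht1 t2 ht2 h12
    simp only
    rcases h12.eq_or_lt with h | h12
    · rw [h]
    obtain ⟨a, ha0, -, hu1, hX1, hP1⟩ := delta_small F hF Δ hΔ x hx tx h0 htx t1 ht1
    obtain ⟨b, hb0, -, hu2, hX2, hP2⟩ := delta_small F hF Δ hΔ x hx tx h0 htx t2 ht2
    rw [hu1, hu2]
    have ht10 : 0 < t1 := lt_of_le_of_lt h0 ht1
    have ht20 : 0 < t2 := ht10.trans h12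
    have e1 := hen a t1
    have e2 := hen b t2
    rw [hX1] at e1
    rw [hX2] at e2
    obtain ⟨hA, hA0⟩ := hF 0 a
    obtain ⟨hB, hB0⟩ := hF 0 b
    have zA : (F 0 0 a).1 = 0 := by rw [hA0]
    have pA : (F 0 0 a).2 = a := by rw [hA0]
    have zB : (F 0 0 b).1 = 0 := by rw [hB0]
    have pB : (F 0 0 b).2 = b := by rw [hB0]
    rcases lt_trichotomy a b with hab | hab | hab
    · have hsq : a ^ 2 < b ^ 2 := pow_lt_pow_left₀ hab ha0.le (by norm_num)
      rcases le_or_gt (F t2 0 b).2 0 with hv | hv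
      · have := abs_lt_of_sq_lt_sq' (a := (F t1 0 a).2) (b := -(F t2 0 b).2)
          (by nlinarith) (by linarith)
        linarith [this.1]
      · exfalso
        have hc := comparison hA hB zA zB (by simpa only [pA, pB] using hab) ht10 hP1
        have hm := smono_of hB.1 h12 (fun s hs hs' => by
          have := p_anti hB hs'.le (fun r hr hr' => hP2 r (by linarith) hr'.le)
          exact lt_of_lt_of_le hv this)
        try simp only at hc hm
        linarith
    · subst hab
      exact p_anti hA h12.le (fun s hs hs' => hP2 s (by linarith) hs'.le)
    · have hsq : b ^ 2 < a ^ 2 := pow_lt_pow_left₀ hab hb0.le (by norm_num)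
      rcases le_or_gt 0 (F t1 0 a).2 with hv | hv
      · have := abs_lt_of_sq_lt_sq' (a := (F t2 0 b).2) (b := (F t1 0 a).2)
          (by nlinarith) hv
        linarith [this.2]
      · exfalso
        have hc : ∀ s, 0 < s → s ≤ t2 → (F s 0 b).1 < (F s 0 a).1 := fun s hs hs' =>
          comparison hB hA zB zA (by simpa only [pA, pB] using hab) hs
            (fun r hr hr' => hP2 r hr (hr'.trans hs'))
        have hm := smono_of (f := fun t => -(F t 0 a).1) (fun t => (hA.1 t).neg) h12
          (fun s hs hs' => by
            have := p_anti hA hs.le (fun r hr hr' =>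
              (hP2 r (by linarith) (by linarith)).trans (hc r (by linarith) (by linarith)))
            try simp only at this
            linarith)
        have := hc t2 ht20 le_rfl
        try simp only at hm
        linarith
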